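/- arXiv:2405.03143 — 7 statements merged into one kernel-verified Lean document; each statement's English description precedes it below -/
import Mathlib

section
/- For every α ∈ (1,2): s_k^{(α)} = s_{−k}^{(α)} for all integers k ≥ 1, and moreover s_0^{(α)} > 0 and s_1^{(α)} < 0. -/
/-- The fourth-order coefficients `s_k^{(α)}`. -/
noncomputable def sCoef (α : ℝ) (k : ℤ) : ℝ :=
  ((-1 : ℝ) ^ k * Real.Gamma (α + 1) /
      (Real.Gamma (α / 2 - k + 1) * Real.Gamma (α / 2 + k + 1))) *
    (1 + α * (α + 1) * (α + 2) / (6 * (α - 2 * k + 2) * (α + 2 * k + 2)))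

theorem stmt_0 (α : ℝ) (hα : α ∈ Set.Ioo (1 : ℝ) 2) :
    (∀ k : ℤ, 1 ≤ k → sCoef α k = sCoef α (-k)) ∧
      0 < sCoef α 0 ∧ sCoef α 1 < 0 := by
  obtain ⟨h1, h2⟩ := hα
  have hG : 0 < Real.Gamma (α + 1) := Real.Gamma_pos_of_pos (by linarith)
  refine ⟨?_, ?_, ?_⟩
  · intro k _
    unfold sCoef
    have e : (-1 : ℝ) ^ (-k) = (-1 : ℝ) ^ k := by
      rw [zpow_neg, ← inv_zpow]; norm_num
    rw [e]
    push_cast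
    have e1 : α / 2 - -(k : ℝ) + 1 = α / 2 + k + 1 := by ring
    have e2 : α / 2 + -(k : ℝ) + 1 = α / 2 - k + 1 := by ring
    have e3 : 6 * (α - 2 * -(k : ℝ) + 2) * (α + 2 * -(k : ℝ) + 2)
        = 6 * (α - 2 * k + 2) * (α + 2 * k + 2) := by ring
    rw [e1, e2, e3, mul_comm (Real.Gamma (α / 2 + k + 1))]
  · have hA : 0 < Real.Gamma (α / 2 + 1) := Real.Gamma_pos_of_pos (by linarith)
    have h0 : 0 < α := by linarith
    simp only [sCoef, Int.cast_zero, zpow_zero, sub_zero, add_zero, mul_zero]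
    positivity
  · have hA : 0 < Real.Gamma (α / 2) := Real.Gamma_pos_of_pos (by linarith)
    have hB : 0 < Real.Gamma (α / 2 + 1 + 1) := Real.Gamma_pos_of_pos (by linarith)
    have h0 : 0 < α := by linarith
    simp only [sCoef, Int.cast_one, zpow_one]
    have e1 : α / 2 - 1 + 1 = α / 2 := by ring
    have e2 : α - 2 * 1 + 2 = α := by ring
    rw [e1, e2]
    apply mul_neg_of_neg_of_pos
    · apply div_neg_of_neg_of_pos
      · linarith
      · positivity
    · positivity
end

section
/- There exists α* ∈ (1.65, 1.66) such that for every α ∈ (1, α*) one has s_2^{(α)} < 0, and for every α ∈ [α*, 2) one has s_2^{(α)} ≥ 0. -/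
lemma sCoef_two_factor (α : ℝ) (h1 : 1 < α) (h2 : α < 2) :
    ∃ C : ℝ, 0 < C ∧ sCoef α 2 = C * (α ^ 3 + 9 * α ^ 2 + 26 * α - 72) := by
  have hx : α / 2 - 1 ≠ 0 := by linarith
  have hG := Real.Gamma_add_one hx
  have e1 : 0 < Real.Gamma (α / 2 - 1 + 1) := Real.Gamma_pos_of_pos (by linarith)
  have e2 : 0 < Real.Gamma (α + 1) := Real.Gamma_pos_of_pos (by linarith)
  have e3 : 0 < Real.Gamma (α / 2 + 2 + 1) := Real.Gamma_pos_of_pos (by linarith)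
  have e4 : Real.Gamma (α / 2 - 1) < 0 := by
    rw [hG] at e1
    by_contra hc
    push Not at hc
    nlinarith
  have h3 : α - 2 < 0 := by linarith
  have h4 : 0 < α + 6 := by linarith
  refine ⟨Real.Gamma (α + 1) / (Real.Gamma (α / 2 - 1) * Real.Gamma (α / 2 + 2 + 1)) *
    (1 / (6 * (α - 2) * (α + 6))), ?_, ?_⟩
  · apply mul_pos_of_neg_of_neg
    · exact div_neg_of_pos_of_neg e2 (mul_neg_of_neg_of_pos e4 e3)
    · apply div_neg_of_pos_of_neg one_pos
      exact mul_neg_of_neg_of_pos (by linarith) h4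
  · unfold sCoef
    have a1 : α / 2 - ((2 : ℤ) : ℝ) + 1 = α / 2 - 1 := by push_cast; ring
    have a2 : α - 2 * ((2 : ℤ) : ℝ) + 2 = α - 2 := by push_cast; ring
    have a3 : α + 2 * ((2 : ℤ) : ℝ) + 2 = α + 6 := by push_cast; ring
    have a4 : ((-1 : ℝ) ^ (2 : ℤ)) = 1 := by norm_num
    have a5 : 1 + α * (α + 1) * (α + 2) / (6 * (α - 2) * (α + 6)) =
        1 / (6 * (α - 2) * (α + 6)) * (α ^ 3 + 9 * α ^ 2 + 26 * α - 72) := by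
      have := h3.ne
      have := h4.ne'
      field_simp
      ring
    rw [a1, a2, a3, a4, a5, one_mul, Int.cast_ofNat]
    ring

theorem stmt_1 :
    ∃ αstar : ℝ, αstar ∈ Set.Ioo (1.65 : ℝ) 1.66 ∧
      (∀ α ∈ Set.Ioo (1 : ℝ) αstar, sCoef α 2 < 0) ∧
      (∀ α ∈ Set.Ico αstar (2 : ℝ), 0 ≤ sCoef α 2) := by
  have hc : ContinuousOn (fun α : ℝ => α ^ 3 + 9 * α ^ 2 + 26 * α - 72)
      (Set.Icc (1.65 : ℝ) 1.66) := by fun_prop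
  obtain ⟨a, ha, h0⟩ := intermediate_value_Ioo (by norm_num) hc
    (show (0 : ℝ) ∈ _ by constructor <;> norm_num)
  have h0' : a ^ 3 + 9 * a ^ 2 + 26 * a - 72 = 0 := h0
  have ha1 : (1.65 : ℝ) < a := ha.1
  have ha2 : a < (1.66 : ℝ) := ha.2
  norm_num at ha1 ha2
  refine ⟨a, ha, ?_, ?_⟩
  · rintro x ⟨hx1, hx2⟩
    obtain ⟨C, hC, h⟩ := sCoef_two_factor x hx1 (by linarith)
    rw [h]
    apply mul_neg_of_pos_of_neg hC
    have : x ^ 3 < a ^ 3 := by gcongr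
    have : x ^ 2 < a ^ 2 := by gcongr
    linarith
  · rintro x ⟨hx1, hx2⟩
    obtain ⟨C, hC, h⟩ := sCoef_two_factor x (by linarith) hx2
    rw [h]
    apply mul_nonneg hC.le
    have : a ^ 3 ≤ x ^ 3 := by gcongr
    have : a ^ 2 ≤ x ^ 2 := by gcongr
    linarith
end

section
/- For every α ∈ (1,2) and every integer k with k ≥ 3, s_k^{(α)} < 0 (and hence also s_{−k}^{(α)} < 0). -/
lemma gamma_sign_aux (a : ℝ) (h0 : 0 < a) (h1 : a < 1) (n : ℕ) :
    0 < (-1 : ℝ) ^ n * Real.Gamma (a - n) := by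
  induction n with
  | zero => simpa using Real.Gamma_pos_of_pos h0
  | succ m ih =>
    have hm : (0 : ℝ) ≤ m := Nat.cast_nonneg m
    have hneg : a - ((m + 1 : ℕ) : ℝ) < 0 := by push_cast; linarith
    have h := Real.Gamma_add_one hneg.ne
    have e : a - ((m + 1 : ℕ) : ℝ) + 1 = a - m := by push_cast; ring
    rw [e] at h
    rw [h] at ih
    have ih' : 0 < (-(a - ((m + 1 : ℕ) : ℝ))) *
        ((-1 : ℝ) ^ (m + 1) * Real.Gamma (a - ((m + 1 : ℕ) : ℝ))) := by
      rw [pow_succ]; linarith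
    exact (pos_iff_pos_of_mul_pos ih').mp (by linarith)

lemma sCoef_neg_index (α : ℝ) (k : ℤ) : sCoef α (-k) = sCoef α k := by
  unfold sCoef
  have e : (-1 : ℝ) ^ (-k) = (-1) ^ k := by
    rw [zpow_neg, ← inv_zpow]; norm_num
  rw [e]
  push_cast
  have e1 : α / 2 - -(k : ℝ) + 1 = α / 2 + k + 1 := by ring
  have e2 : α / 2 + -(k : ℝ) + 1 = α / 2 - k + 1 := by ring
  rw [e1, e2, mul_comm (Real.Gamma (α / 2 + k + 1))]
  congr 3
  ring

theorem stmt_2 (α : ℝ) (hα : α ∈ Set.Ioo (1 : ℝ) 2) (k : ℤ) (hk : 3 ≤ k) :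
    sCoef α k < 0 ∧ sCoef α (-k) < 0 := by
  rw [sCoef_neg_index, and_self]
  obtain ⟨h1, h2⟩ := hα
  obtain ⟨n, rfl⟩ : ∃ n : ℕ, k = (n : ℤ) + 1 := ⟨(k - 1).toNat, by omega⟩
  have hn : (2 : ℝ) ≤ n := by exact_mod_cast (by omega : 2 ≤ n)
  have hs := gamma_sign_aux (α / 2) (by linarith) (by linarith) n
  unfold sCoef
  push_cast
  have e1 : α / 2 - ((n : ℝ) + 1) + 1 = α / 2 - n := by ring
  rw [e1]
  have hG1 : 0 < Real.Gamma (α + 1) := Real.Gamma_pos_of_pos (by linarith)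
  have hG2 : 0 < Real.Gamma (α / 2 + (n + 1) + 1) := Real.Gamma_pos_of_pos (by linarith)
  have hpow : (-1 : ℝ) ^ ((n : ℤ) + 1) = -(-1) ^ n := by
    rw [zpow_add₀ (by norm_num)]; simp
  rw [hpow]
  apply mul_neg_of_neg_of_pos
  · have hg : Real.Gamma (α / 2 - n) ≠ 0 := right_ne_zero_of_mul hs.ne'
    have : -(-1 : ℝ) ^ n * Real.Gamma (α + 1) /
        (Real.Gamma (α / 2 - n) * Real.Gamma (α / 2 + (n + 1) + 1)) =
        -(((-1 : ℝ) ^ n * Real.Gamma (α / 2 - n)) * Real.Gamma (α + 1) /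
        (Real.Gamma (α / 2 - n) ^ 2 * Real.Gamma (α / 2 + (n + 1) + 1))) := by
      field_simp
    rw [this, neg_lt_zero]
    positivity
  · have hA : α * (α + 1) * (α + 2) < 24 := by
      have : α * (α + 1) < 6 := by nlinarith
      nlinarith
    have hD : 24 < -(6 * (α - 2 * ((n : ℝ) + 1) + 2) * (α + 2 * (n + 1) + 2)) := by
      nlinarith
    have hD' : 6 * (α - 2 * ((n : ℝ) + 1) + 2) * (α + 2 * (n + 1) + 2) < 0 := by linarith
    have : -1 < α * (α + 1) * (α + 2) /
        (6 * (α - 2 * ((n : ℝ) + 1) + 2) * (α + 2 * (n + 1) + 2)) := by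
      rw [lt_div_iff_of_neg hD']; linarith
    linarith
end

section
/- For every α ∈ (1,2), the family (s_k^{(α)})_{k ∈ ℤ} is summable and its sum over all k ∈ ℤ equals 0. -/
open Filter Topology in
lemma half_sum (a : ℝ) (ha : 0 < a) (p : ℕ → ℝ)
    (hp : ∀ k : ℕ, p (k + 1) * (k + 1 + a) = (k - a) * p k) :
    HasSum p (p 0 / 2) := by
  set t : ℕ → ℝ := fun k => (a + k) * p k with ht
  have h1 : ∀ k : ℕ, p k = (t k - t (k + 1)) / (2 * a) := by
    intro k
    have := hp k
    simp only [ht]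
    push_cast
    field_simp
    linarith
  obtain ⟨N, hN⟩ := exists_nat_gt a
  have habs : ∀ k : ℕ, N ≤ k → |p k| = (|t k| - |t (k + 1)|) / (2 * a) := by
    intro k hk
    have hk' : (N : ℝ) ≤ k := by exact_mod_cast hk
    have e1 : |t k| = (a + k) * |p k| := by
      simp only [ht]
      rw [abs_mul, abs_of_pos (by linarith)]
    have e2 : |t (k + 1)| = (k - a) * |p k| := by
      have : t (k + 1) = (k - a) * p k := by
        rw [← hp k]; simp only [ht]; push_cast; ring
      rw [this, abs_mul, abs_of_pos (by linarith)]
    rw [e1, e2]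
    field_simp
    ring
  have hsum' : Summable (fun k => |p (k + N)|) := by
    refine summable_of_sum_range_le (c := |t N| / (2 * a)) (fun _ => abs_nonneg _) ?_
    intro n
    have : ∑ i ∈ Finset.range n, |p (i + N)| = (|t N| - |t (n + N)|) / (2 * a) := by
      induction n with
      | zero => simp
      | succ n ih =>
        rw [Finset.sum_range_succ, ih, habs (n + N) (by omega),
          show n + 1 + N = n + N + 1 by ring]
        ring
    rw [this]
    gcongr
    linarith [abs_nonneg (t (n + N))]
  have habsum : Summable (fun k => |p k|) := (summable_nat_add_iff N).1 hsum'
  have hsum : Summable p := habsum.of_abs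
  have hpart : ∀ n, ∑ i ∈ Finset.range n, p i = (t 0 - t n) / (2 * a) := by
    intro n
    induction n with
    | zero => simp
    | succ n ih => rw [Finset.sum_range_succ, ih, h1 n]; ring
  have htend : Tendsto t atTop (𝓝 (t 0 - 2 * a * ∑' i, p i)) := by
    have := (hsum.hasSum.tendsto_sum_nat.const_mul (2 * a)).const_sub (t 0)
    refine this.congr fun n => ?_
    rw [hpart]
    field_simp
    ring
  have hL : t 0 - 2 * a * ∑' i, p i = 0 := by
    by_contra hne
    set L := t 0 - 2 * a * ∑' i, p i
    have hLpos : 0 < |L| := abs_pos.2 hne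
    have hev : ∀ᶠ k in atTop, |L| / 2 < |t k| :=
      htend.abs.eventually (lt_mem_nhds (by linarith))
    apply Real.not_summable_one_div_natCast
    refine Summable.of_norm_bounded_eventually_nat (habsum.mul_left (4 / |L|)) ?_
    filter_upwards [hev, eventually_ge_atTop (N + 1)] with k hk hkN
    have hkN' : (N : ℝ) + 1 ≤ k := by exact_mod_cast hkN
    have hk0 : (0 : ℝ) < k := by linarith
    have e1 : |t k| = (a + k) * |p k| := by
      simp only [ht]
      rw [abs_mul, abs_of_pos (by linarith)]
    rw [Real.norm_of_nonneg (by positivity), div_mul_eq_mul_div, div_le_div_iff₀ hk0 hLpos]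
    have : (a + k) * |p k| ≤ (2 * k) * |p k| := by
      gcongr
      linarith
    nlinarith
  have : ∑' i, p i = p 0 / 2 := by
    have h0 : t 0 = a * p 0 := by simp [ht]
    rw [h0] at hL
    have : a * (p 0 - 2 * ∑' i, p i) = 0 := by linarith
    rcases mul_eq_zero.1 this with h | h <;> linarith
  rw [← this]
  exact hsum.hasSum

/-- Unnormalised central coefficients. -/
noncomputable def pCoef (a : ℝ) (k : ℤ) : ℝ :=
  (-1 : ℝ) ^ k / (Real.Gamma (a - k + 1) * Real.Gamma (a + k + 1))

lemma pCoef_rec (a : ℝ) (ha : ∀ m : ℤ, a ≠ m) (k : ℤ) :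
    pCoef a (k + 1) * (k + 1 + a) = (k - a) * pCoef a k := by
  have g : ∀ m : ℤ, Real.Gamma (a + m) ≠ 0 := fun m =>
    Real.Gamma_ne_zero fun n h => ha (-m - n) (by push_cast; linarith)
  have n1 : a - k ≠ 0 := fun h => ha k (by linarith)
  have n2 : a + k + 1 ≠ 0 := fun h => ha (-k - 1) (by push_cast; linarith)
  have g1 : Real.Gamma (a - k) ≠ 0 := by simpa [sub_eq_add_neg] using g (-k)
  have g2 : Real.Gamma (a + k + 1) ≠ 0 := by simpa [add_assoc] using g (k + 1)
  unfold pCoef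
  push_cast
  rw [show a - (k + 1 : ℝ) + 1 = a - k by ring, show a + (k + 1 : ℝ) + 1 = (a + k + 1) + 1 by ring,
    Real.Gamma_add_one n1, Real.Gamma_add_one n2, zpow_add₀ (by norm_num)]
  have n3 : (k : ℝ) + 1 + a ≠ 0 := fun h => n2 (by linarith)
  field_simp
  ring

lemma pCoef_neg (a : ℝ) (k : ℤ) : pCoef a (-k) = pCoef a k := by
  unfold pCoef
  push_cast
  rw [sub_neg_eq_add, ← sub_eq_add_neg, mul_comm (Real.Gamma (a + k + 1)), zpow_neg,
    ← inv_zpow]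
  norm_num

lemma pCoef_hasSum (a : ℝ) (h0 : 0 < a) (ha : ∀ m : ℤ, a ≠ m) :
    HasSum (pCoef a) 0 := by
  have hs := half_sum a h0 (fun k : ℕ => pCoef a k) (fun k => by
    have := pCoef_rec a ha k
    push_cast at this ⊢
    exact this)
  have hs2 : HasSum (fun n : ℕ => pCoef a (-(n + 1 : ℤ))) (-(pCoef a 0 / 2)) := by
    have := (hasSum_nat_add_iff' 1).2 hs
    simp only [Finset.sum_range_one, Nat.cast_zero] at this
    have e1 : (fun n : ℕ => pCoef a (-(n + 1 : ℤ))) = fun n : ℕ => pCoef a ((n + 1 : ℕ) : ℤ) := by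
      funext n
      rw [pCoef_neg]; push_cast; rfl
    have e2 : -(pCoef a 0 / 2) = pCoef a 0 / 2 - pCoef a 0 := by ring
    rw [e1, e2]
    exact this
  have := HasSum.of_nat_of_neg_add_one hs hs2
  simpa using this

lemma sCoef_eq (α : ℝ) (h0 : 0 < α) (ha : ∀ m : ℤ, α / 2 ≠ m) (k : ℤ) :
    sCoef α k = Real.Gamma (α + 1) * pCoef (α / 2) k +
      Real.Gamma (α + 1) * (α * (α + 1) * (α + 2) / 24) * pCoef (α / 2 + 1) k := by
  have g : ∀ m : ℤ, Real.Gamma (α / 2 + m) ≠ 0 := fun m =>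
    Real.Gamma_ne_zero fun n h => ha (-m - n) (by push_cast; linarith)
  have n1 : α / 2 - k + 1 ≠ 0 := fun h => ha (k - 1) (by push_cast; linarith)
  have n2 : α / 2 + k + 1 ≠ 0 := fun h => ha (-k - 1) (by push_cast; linarith)
  have g1 : Real.Gamma (α / 2 - k + 1) ≠ 0 := by
    convert g (-k + 1) using 2; push_cast; ring
  have g2 : Real.Gamma (α / 2 + k + 1) ≠ 0 := by
    convert g (k + 1) using 2; push_cast; ring
  unfold sCoef pCoef
  rw [show α / 2 + 1 - k + 1 = (α / 2 - k + 1) + 1 by ring,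
    show α / 2 + 1 + k + 1 = (α / 2 + k + 1) + 1 by ring,
    Real.Gamma_add_one n1, Real.Gamma_add_one n2,
    show α - 2 * k + 2 = 2 * (α / 2 - k + 1) by ring,
    show α + 2 * k + 2 = 2 * (α / 2 + k + 1) by ring]
  generalize α / 2 - k + 1 = x at *
  generalize α / 2 + k + 1 = y at *
  field_simp
  ring

theorem stmt_3 (α : ℝ) (hα : α ∈ Set.Ioo (1 : ℝ) 2) :
    Summable (fun k : ℤ => sCoef α k) ∧ ∑' k : ℤ, sCoef α k = 0 := by
  obtain ⟨h1, h2⟩ := hα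
  have ha : ∀ m : ℤ, α / 2 ≠ m := by
    intro m h
    have e1 : (0 : ℝ) < m := by linarith
    have e2 : (m : ℝ) < 1 := by linarith
    have e3 : 0 < m := by exact_mod_cast e1
    have e4 : m < 1 := by exact_mod_cast e2
    omega
  have ha' : ∀ m : ℤ, α / 2 + 1 ≠ m := fun m h => ha (m - 1) (by push_cast; linarith)
  have hs := ((pCoef_hasSum (α / 2) (by linarith) ha).mul_left (Real.Gamma (α + 1))).add
    ((pCoef_hasSum (α / 2 + 1) (by linarith) ha').mul_left
      (Real.Gamma (α + 1) * (α * (α + 1) * (α + 2) / 24)))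
  have : HasSum (fun k : ℤ => sCoef α k) 0 := by
    rw [funext (sCoef_eq α (by linarith) ha)]
    simpa using hs
  exact ⟨this.summable, this.tsum_eq⟩
end

section
/- For every γ ∈ (1,2) and every k ∈ ℤ, (1/(2π)) · ∫_{−π}^{π} (2 − 2 cos θ)^{γ/2} · cos(kθ) dθ = g_k^{(γ)}. -/
open Real

/-- The second-order (fractional centered difference) coefficients `g_k^{(γ)}`. -/
noncomputable def gCoef (γ : ℝ) (k : ℤ) : ℝ :=
  (-1 : ℝ) ^ k * Real.Gamma (γ + 1) /
    (Real.Gamma (γ / 2 - k + 1) * Real.Gamma (γ / 2 + k + 1))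

lemma aux_cont (s : ℝ) (hs : 0 < s) :
    Continuous (fun θ : ℝ => (2 - 2 * Real.cos θ) ^ s) :=
  Continuous.rpow_const (by fun_prop) (fun _ => Or.inr hs.le)

lemma aux_pos {θ : ℝ} (h1 : -π < θ) (h2 : θ < π) (h0 : θ ≠ 0) : 0 < 2 - 2 * Real.cos θ := by
  have hne : Real.cos θ ≠ 1 := by
    intro h
    exact h0 ((Real.cos_eq_one_iff_of_lt_of_lt (by linarith [Real.pi_pos]) (by linarith [Real.pi_pos])).1 h)
  have := lt_of_le_of_ne (Real.cos_le_one θ) hne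
  linarith

/-- The recurrence in `k` for the integrals. -/
lemma aux_rec (s : ℝ) (hs : 0 < s) (k : ℕ) :
    (s + k + 1) * (∫ θ in (-π)..π, (2 - 2 * Real.cos θ) ^ s * Real.cos (((k : ℝ) + 1) * θ))
      + (s - k) * (∫ θ in (-π)..π, (2 - 2 * Real.cos θ) ^ s * Real.cos ((k : ℝ) * θ)) = 0 := by
  have hc := aux_cont s hs
  have hi : ∀ a : ℝ, Continuous
      (fun θ : ℝ => (2 - 2 * Real.cos θ) ^ s * Real.cos (a * θ)) :=
    fun a => hc.mul (by fun_prop)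
  have key := MeasureTheory.integral_eq_of_hasDerivAt_off_countable
    (fun θ : ℝ => (2 - 2 * Real.cos θ) ^ s * (Real.sin (((k : ℝ) + 1) * θ) - Real.sin ((k : ℝ) * θ)))
    (fun θ : ℝ => (s + k + 1) * ((2 - 2 * Real.cos θ) ^ s * Real.cos (((k : ℝ) + 1) * θ))
      + (s - k) * ((2 - 2 * Real.cos θ) ^ s * Real.cos ((k : ℝ) * θ)))
    (a := -π) (b := π) (s := {0}) (Set.countable_singleton 0)
    (hc.mul (by fun_prop)).continuousOn ?_ ?_
  · rw [intervalIntegral.integral_add, intervalIntegral.integral_const_mul,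
      intervalIntegral.integral_const_mul] at key
    · rw [key]
      have e1 : Real.sin (((k : ℝ) + 1) * π) = 0 := by exact_mod_cast Real.sin_nat_mul_pi (k + 1)
      simp [e1]
    · exact ((hi _).const_mul _).intervalIntegrable _ _
    · exact ((hi _).const_mul _).intervalIntegrable _ _
  · rintro θ ⟨⟨h1, h2⟩, h0⟩
    have hle : -π ≤ π := by linarith [Real.pi_pos]
    rw [min_eq_left hle] at h1
    rw [max_eq_right hle] at h2
    have hpos := aux_pos h1 h2 h0
    have d1 : HasDerivAt (fun θ : ℝ => 2 - 2 * Real.cos θ) (2 * Real.sin θ) θ := by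
      have := ((Real.hasDerivAt_cos θ).const_mul 2).const_sub 2
      simpa using this
    have d2 := d1.rpow_const (p := s) (Or.inl hpos.ne')
    have d3 : ∀ a : ℝ, HasDerivAt (fun θ : ℝ => Real.sin (a * θ)) (a * Real.cos (a * θ)) θ := by
      intro a
      have := ((hasDerivAt_id θ).const_mul a).sin
      simpa [mul_comm] using this
    have d4 := d2.mul ((d3 ((k : ℝ) + 1)).sub (d3 k))
    refine d4.congr_deriv ?_
    have hw : (2 - 2 * Real.cos θ) ^ s = (2 - 2 * Real.cos θ) ^ (s - 1) * (2 - 2 * Real.cos θ) := by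
      rw [← Real.rpow_add_one hpos.ne']; congr 1; ring
    have hcos : Real.cos (((k : ℝ) + 1) * θ)
        = Real.cos (k * θ) * Real.cos θ - Real.sin (k * θ) * Real.sin θ := by
      rw [add_mul, one_mul, Real.cos_add]
    have hsin : Real.sin (((k : ℝ) + 1) * θ)
        = Real.sin (k * θ) * Real.cos θ + Real.cos (k * θ) * Real.sin θ := by
      rw [add_mul, one_mul, Real.sin_add]
    simp only [Pi.sub_apply]
    rw [hw, hcos, hsin]
    have hsq := Real.sin_sq_add_cos_sq θ
    generalize (2 - 2 * Real.cos θ) ^ (s - 1) = W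
    generalize Real.cos (k * θ) = C
    generalize Real.sin (k * θ) = S
    linear_combination (2 * s * W * C) * hsq
  · exact (((hi _).const_mul _).add ((hi _).const_mul _)).intervalIntegrable _ _

lemma aux_beta (s : ℝ) (hs : 0 < s) :
    ∫ x in Set.Ioo (0 : ℝ) 1, x ^ (s - 1 / 2) * (1 - x) ^ (-(1 / 2) : ℝ)
      = Real.Gamma (s + 1 / 2) * √π / Real.Gamma (s + 1) := by
  have h := Complex.betaIntegral_eq_Gamma_mul_div ((s + 1 / 2 : ℝ) : ℂ) ((1 / 2 : ℝ) : ℂ)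
    (by rw [Complex.ofReal_re]; positivity) (by rw [Complex.ofReal_re]; positivity)
  rw [← Complex.ofReal_add, Complex.Gamma_ofReal, Complex.Gamma_ofReal, Complex.Gamma_ofReal,
    Real.Gamma_one_half_eq, show s + 1 / 2 + 1 / 2 = s + 1 by ring] at h
  unfold Complex.betaIntegral at h
  rw [intervalIntegral.integral_of_le zero_le_one, MeasureTheory.integral_Ioc_eq_integral_Ioo] at h
  rw [← Complex.ofReal_inj, ← integral_complex_ofReal]
  rw [Complex.ofReal_div, Complex.ofReal_mul, ← h]
  refine MeasureTheory.setIntegral_congr_fun measurableSet_Ioo ?_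
  rintro x ⟨h0, h1⟩
  simp only
  rw [Complex.ofReal_mul, Complex.ofReal_cpow h0.le, Complex.ofReal_cpow (by linarith)]
  push_cast
  congr 2 <;> ring

lemma aux_image : (fun θ : ℝ => (1 - Real.cos θ) / 2) '' Set.Ioo 0 π = Set.Ioo 0 1 := by
  ext x
  constructor
  · rintro ⟨θ, ⟨h0, h1⟩, rfl⟩
    have a := Real.cos_lt_cos_of_nonneg_of_le_pi le_rfl h1.le h0
    have b := Real.cos_lt_cos_of_nonneg_of_le_pi h0.le le_rfl h1
    rw [Real.cos_zero] at a
    rw [Real.cos_pi] at b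
    constructor <;> simp only <;> linarith
  · rintro ⟨h0, h1⟩
    refine ⟨Real.arccos (1 - 2 * x), ⟨Real.arccos_pos.2 (by linarith), ?_⟩, ?_⟩
    · refine lt_of_le_of_ne (Real.arccos_le_pi _) ?_
      intro h
      rw [Real.arccos_eq_pi] at h
      linarith
    · simp only
      rw [Real.cos_arccos (by linarith) (by linarith)]
      ring

lemma aux_half (s : ℝ) (hs : 0 < s) :
    ∫ θ in Set.Ioo (0 : ℝ) π, (2 - 2 * Real.cos θ) ^ s
      = (4 : ℝ) ^ s * (Real.Gamma (s + 1 / 2) * √π / Real.Gamma (s + 1)) := by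
  rw [← aux_beta s hs, ← aux_image]
  rw [MeasureTheory.integral_image_eq_integral_abs_deriv_smul measurableSet_Ioo
    (f' := fun θ => Real.sin θ / 2)]
  · rw [← MeasureTheory.integral_const_mul]
    refine MeasureTheory.setIntegral_congr_fun measurableSet_Ioo ?_
    rintro θ ⟨h0, h1⟩
    have hsin : 0 < Real.sin θ := Real.sin_pos_of_pos_of_lt_pi h0 h1
    have hp : 0 < (1 - Real.cos θ) / 2 := by
      have := aux_pos (by linarith) h1 h0.ne'
      linarith
    have hq : 0 < 1 - (1 - Real.cos θ) / 2 := by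
      have b := Real.cos_lt_cos_of_nonneg_of_le_pi h0.le le_rfl h1
      rw [Real.cos_pi] at b
      linarith
    simp only [smul_eq_mul]
    rw [abs_of_pos (by positivity)]
    rw [show 2 - 2 * Real.cos θ = 4 * ((1 - Real.cos θ) / 2) by ring,
      Real.mul_rpow (by norm_num) hp.le]
    have hS : Real.sin θ / 2 = √((1 - Real.cos θ) / 2) * √(1 - (1 - Real.cos θ) / 2) := by
      rw [← Real.sqrt_mul hp.le, eq_comm, Real.sqrt_eq_iff_eq_sq (by positivity) (by positivity)]
      linear_combination (-1 / 4) * Real.sin_sq_add_cos_sq θ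
    rw [hS, Real.rpow_sub hp, Real.rpow_neg hq.le, ← Real.sqrt_eq_rpow, ← Real.sqrt_eq_rpow]
    have hp' := Real.sqrt_pos.2 hp
    have hq' := Real.sqrt_pos.2 hq
    generalize √((1 - Real.cos θ) / 2) = A at *
    generalize √(1 - (1 - Real.cos θ) / 2) = B at *
    generalize ((1 - Real.cos θ) / 2) ^ s = C at *
    field_simp
  · intro θ _
    have := (((Real.hasDerivAt_cos θ).const_sub 1).div_const 2).hasDerivWithinAt (s := Set.Ioo 0 π)
    simpa using this
  · intro a ha b hb hab
    refine Real.injOn_cos ⟨ha.1.le, ha.2.le⟩ ⟨hb.1.le, hb.2.le⟩ ?_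
    simp only at hab
    linarith

lemma aux_zero (s : ℝ) (hs : 0 < s) :
    (∫ θ in (-π)..π, (2 - 2 * Real.cos θ) ^ s)
      = 2 * π * (Real.Gamma (2 * s + 1) / (Real.Gamma (s + 1) * Real.Gamma (s + 1))) := by
  have hc := aux_cont s hs
  rw [← intervalIntegral.integral_add_adjacent_intervals (b := 0)
    (hc.intervalIntegrable _ _) (hc.intervalIntegrable _ _)]
  have hneg : (∫ θ in (-π)..0, (2 - 2 * Real.cos θ) ^ s)
      = ∫ θ in (0)..π, (2 - 2 * Real.cos θ) ^ s := by
    have := intervalIntegral.integral_comp_neg (a := 0) (b := π)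
      (fun θ : ℝ => (2 - 2 * Real.cos θ) ^ s)
    simpa using this.symm
  rw [hneg, intervalIntegral.integral_of_le Real.pi_pos.le,
    MeasureTheory.integral_Ioc_eq_integral_Ioo, aux_half s hs]
  have hd := Real.Gamma_mul_Gamma_add_half (s + 1 / 2)
  rw [show s + 1 / 2 + 1 / 2 = s + 1 by ring, show 2 * (s + 1 / 2) = 2 * s + 1 by ring,
    show 1 - (2 * s + 1) = -(2 * s) by ring, Real.rpow_neg (by norm_num),
    Real.rpow_mul (by norm_num), show (2 : ℝ) ^ (2 : ℝ) = 4 by norm_num] at hd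
  have hG : 0 < Real.Gamma (s + 1) := Real.Gamma_pos_of_pos (by positivity)
  have h4 : (0 : ℝ) < 4 ^ s := by positivity
  have hpi := Real.sq_sqrt Real.pi_pos.le
  have hd' : Real.Gamma (s + 1 / 2) * Real.Gamma (s + 1) * 4 ^ s = Real.Gamma (2 * s + 1) * √π := by
    rw [hd]; field_simp
  generalize Real.Gamma (s + 1 / 2) = A at *
  generalize Real.Gamma (2 * s + 1) = D at *
  generalize Real.Gamma (s + 1) = B at *
  field_simp
  linear_combination (2 * √π) * hd' + 2 * D * hpi

lemma aux_nat (γ : ℝ) (hγ : γ ∈ Set.Ioo (1 : ℝ) 2) (k : ℕ) :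
    (∫ θ in (-π)..π, (2 - 2 * Real.cos θ) ^ (γ / 2) * Real.cos ((k : ℝ) * θ))
      = 2 * π * gCoef γ k := by
  obtain ⟨g1, g2⟩ := hγ
  have hs : 0 < γ / 2 := by linarith
  induction k with
  | zero =>
    have := aux_zero (γ / 2) hs
    simpa [gCoef, mul_div_cancel₀] using this
  | succ k ih =>
    have hr := aux_rec (γ / 2) hs k
    rw [ih] at hr
    have hk : γ / 2 - k ≠ 0 := by
      intro h
      have e : γ / 2 = k := by linarith
      have a : (0 : ℝ) < k := by linarith
      have b : (k : ℝ) < 1 := by linarith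
      have a' : 0 < k := by exact_mod_cast a
      have b' : k < 1 := by exact_mod_cast b
      omega
    have hp : γ / 2 + k + 1 ≠ 0 := by positivity
    have hg : (γ / 2 + k + 1) * gCoef γ ((k + 1 : ℕ) : ℤ) = - (γ / 2 - k) * gCoef γ k := by
      unfold gCoef
      push_cast
      rw [show γ / 2 - ((k : ℝ) + 1) + 1 = γ / 2 - k by ring,
        show γ / 2 + ((k : ℝ) + 1) + 1 = (γ / 2 + k + 1) + 1 by ring,
        Real.Gamma_add_one hk, Real.Gamma_add_one hp, zpow_add_one₀ (by norm_num)]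
      generalize Real.Gamma (γ / 2 - k) = A
      generalize Real.Gamma (γ / 2 + k + 1) = B
      generalize (γ / 2 - (k : ℝ)) = u at *
      generalize (γ / 2 + (k : ℝ) + 1) = v at *
      rw [div_eq_mul_inv, div_eq_mul_inv, mul_inv, mul_inv, mul_inv, mul_inv]
      field_simp
    apply mul_left_cancel₀ hp
    push_cast at hg ⊢
    linear_combination hr - 2 * π * hg

lemma aux_neg (γ : ℝ) (k : ℤ) : gCoef γ (-k) = gCoef γ k := by
  unfold gCoef
  have : (-1 : ℝ) ^ (-k) = (-1) ^ k := by
    rw [zpow_neg, ← inv_zpow]; norm_num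
  rw [this]
  push_cast
  rw [sub_neg_eq_add, ← sub_eq_add_neg, mul_comm (Real.Gamma (γ / 2 + k + 1))]

theorem stmt_4 (γ : ℝ) (hγ : γ ∈ Set.Ioo (1 : ℝ) 2) (k : ℤ) :
    (1 / (2 * π)) *
        ∫ θ in (-π)..π, (2 - 2 * Real.cos θ) ^ (γ / 2) * Real.cos ((k : ℝ) * θ)
      = gCoef γ k := by
  have hpi := Real.pi_pos
  obtain ⟨n, rfl | rfl⟩ := k.eq_nat_or_neg
  · have := aux_nat γ hγ n
    rw [Int.cast_natCast, this]
    field_simp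
  · have := aux_nat γ hγ n
    rw [aux_neg]
    simp only [Int.cast_neg, Int.cast_natCast, neg_mul, Real.cos_neg]
    rw [this]
    field_simp
end

section
/- Let α, β ∈ (1,2), N_x, N_y ≥ 1, η_α, η_β > 0, and N = N_x·N_y. Then P_α = Q_α·τ(Â_α) (size N_x) and P_β = Q_β·τ(Â_β) (size N_y) are symmetric positive definite, and the τ-matrix based preconditioner P_τ = I_N + η_α (I_{N_y} ⊗ P_α) + η_β (P_β ⊗ I_{N_x}) is symmetric positive definite; in particular P_τ is invertible. -/
open Matrix Kronecker

/-- `Â_γ`: the symmetric Toeplitz matrix with `(i,j)` entry `g_{i-j}^{(γ)}`. -/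
noncomputable def Ahat (γ : ℝ) (N : ℕ) : Matrix (Fin N) (Fin N) ℝ :=
  fun i j => gCoef γ ((i : ℤ) - (j : ℤ))

/-- τ part of the symmetric Toeplitz matrix with first column `t 0, …, t (N-1)`:
with 1-based indices `i, j ∈ {1,…,N}` (here `i.val + 1`, `j.val + 1`) and the
convention `t m = 0` for `m ≥ N`, the `(i,j)` entry is
`t |i-j| - t (i+j) - t (2(N+1)-i-j)`. -/
noncomputable def tauOf (N : ℕ) (t : ℕ → ℝ) : Matrix (Fin N) (Fin N) ℝ :=
  fun i j =>
    (fun m => if m < N then t m else 0) ((i : ℤ) - (j : ℤ)).natAbs -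
    (fun m => if m < N then t m else 0) (((i : ℕ) + 1) + ((j : ℕ) + 1)) -
    (fun m => if m < N then t m else 0) (2 * (N + 1) - ((i : ℕ) + 1) - ((j : ℕ) + 1))

/-- `τ(Â_γ)`. -/
noncomputable def tauAhat (γ : ℝ) (N : ℕ) : Matrix (Fin N) (Fin N) ℝ :=
  tauOf N (fun m => gCoef γ (m : ℤ))

/-- The tridiagonal matrix with `2` on the diagonal and `-1` on the sub/superdiagonals. -/
def triDiag (N : ℕ) : Matrix (Fin N) (Fin N) ℝ :=
  fun i j =>
    if (i : ℤ) = (j : ℤ) then 2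
    else if ((i : ℤ) - (j : ℤ)).natAbs = 1 then -1 else 0

/-- `Q_γ = I_N + (γ/24)·T_N`. -/
noncomputable def Qmat (γ : ℝ) (N : ℕ) : Matrix (Fin N) (Fin N) ℝ :=
  1 + (γ / 24) • triDiag N

/-- `P_γ = Q_γ · τ(Â_γ)`. -/
noncomputable def Pmat (γ : ℝ) (N : ℕ) : Matrix (Fin N) (Fin N) ℝ :=
  Qmat γ N * tauAhat γ N

/-- Strictly diagonally dominant symmetric real matrices with positive diagonal are PD. -/
lemma posDef_of_diagDom {n : ℕ} (A : Matrix (Fin n) (Fin n) ℝ) (hA : A.IsHermitian)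
    (h : ∀ k, ∑ j ∈ Finset.univ.erase k, ‖A k j‖ < A k k) : A.PosDef := by
  rw [hA.posDef_iff_eigenvalues_pos]
  intro i
  have hev : Module.End.HasEigenvalue (Matrix.toLin' A) (hA.eigenvalues i) := by
    apply Module.End.hasEigenvalue_of_hasEigenvector (x := ⇑(hA.eigenvectorBasis i))
    refine ⟨?_, ?_⟩
    · rw [Module.End.mem_eigenspace_iff, Matrix.toLin'_apply]
      exact hA.mulVec_eigenvectorBasis i
    · intro h0
      apply hA.eigenvectorBasis.toBasis.ne_zero i
      ext j
      simpa using congrFun h0 j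
  obtain ⟨k, hk⟩ := eigenvalue_mem_ball hev
  rw [Metric.mem_closedBall, Real.dist_eq] at hk
  have := h k
  have := (abs_le.mp hk).1
  linarith

/-- the product of commuting PD matrices is PD. -/
lemma posDef_mul {n : ℕ} (A B : Matrix (Fin n) (Fin n) ℝ) (hA : A.PosDef) (hB : B.PosDef)
    (hs : (A * B).IsHermitian) : (A * B).PosDef := by
  rw [hs.posDef_iff_eigenvalues_pos]
  intro i
  set v : Fin n → ℝ := ⇑(hs.eigenvectorBasis i) with hv
  set l := hs.eigenvalues i with hl
  have h1 : (A * B) *ᵥ v = l • v := hs.mulVec_eigenvectorBasis i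
  have hv0 : v ≠ 0 := by
    intro h0
    apply hs.eigenvectorBasis.toBasis.ne_zero i
    ext j
    simpa using congrFun h0 j
  have h2 : B *ᵥ v = l • (A⁻¹ *ᵥ v) := by
    have hu : IsUnit A.det := (Matrix.isUnit_iff_isUnit_det A).mp hA.isUnit
    rw [← Matrix.mulVec_smul, ← h1, Matrix.mulVec_mulVec, ← Matrix.mul_assoc,
      Matrix.nonsing_inv_mul _ hu, Matrix.one_mul]
  have h3 := hB.dotProduct_mulVec_pos hv0
  have h4 := hA.inv.dotProduct_mulVec_pos hv0
  rw [h2, dotProduct_smul, smul_eq_mul] at h3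
  exact pos_of_mul_pos_left h3 h4.le

/-- cut-off even extension -/
noncomputable def cutF (n : ℕ) (t : ℕ → ℝ) (m : ℤ) : ℝ := if m.natAbs < n then t m.natAbs else 0

lemma cutF_neg (n : ℕ) (t : ℕ → ℝ) (m : ℤ) : cutF n t (-m) = cutF n t m := by
  simp [cutF]

lemma cutF_zero (n : ℕ) (t : ℕ → ℝ) (m : ℤ) (h : n ≤ m.natAbs) : cutF n t m = 0 := by
  simp [cutF, h]

lemma tauOf_eq (n : ℕ) (t : ℕ → ℝ) (i j : Fin n) :
    tauOf n t i j = cutF n t ((i : ℤ) - j) - cutF n t ((i : ℤ) + j + 2) -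
      cutF n t (2 * n - i - j) := by
  have hi := i.2
  have hj := j.2
  have e1 : ((i : ℤ) + j + 2).natAbs = ((i : ℕ) + 1) + ((j : ℕ) + 1) := by omega
  have e2 : (2 * (n : ℤ) - i - j).natAbs = 2 * (n + 1) - ((i : ℕ) + 1) - ((j : ℕ) + 1) := by omega
  simp only [tauOf, cutF, e1, e2]

lemma tauOf_symm (n : ℕ) (t : ℕ → ℝ) (i j : Fin n) : tauOf n t i j = tauOf n t j i := by
  rw [tauOf_eq, tauOf_eq, ← cutF_neg n t ((i : ℤ) - j), neg_sub, add_comm (i : ℤ) j,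
    sub_right_comm (2 * (n : ℤ)) i j]

lemma tauOf_isHermitian (n : ℕ) (t : ℕ → ℝ) : (tauOf n t).IsHermitian := by
  ext i j
  simp [tauOf_symm n t j i]

/-- Sum over a symmetric window. -/
lemma sum_window (t : ℕ → ℝ) (k : ℕ) :
    ∑ m ∈ Finset.Icc (-(k : ℤ)) k, (if m = 0 then 0 else -t m.natAbs) =
      -(2 * ∑ m ∈ Finset.range k, t (m + 1)) := by
  induction k with
  | zero => simp
  | succ k ih =>
    have : Finset.Icc (-((k + 1 : ℕ) : ℤ)) ((k + 1 : ℕ) : ℤ) =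
        insert (-((k + 1 : ℕ) : ℤ)) (insert ((k + 1 : ℕ) : ℤ) (Finset.Icc (-(k : ℤ)) k)) := by
      ext x
      simp only [Finset.mem_Icc, Finset.mem_insert]
      omega
    rw [this, Finset.sum_insert, Finset.sum_insert, ih, Finset.sum_range_succ]
    · have a1 : -((k + 1 : ℕ) : ℤ) ≠ 0 := by omega
      have a2 : ((k + 1 : ℕ) : ℤ) ≠ 0 := by omega
      rw [if_neg a1, if_neg a2]
      simp only [Int.natAbs_neg, Int.natAbs_natCast]
      ring
    · simp only [Finset.mem_Icc]; omega
    · simp only [Finset.mem_Icc, Finset.mem_insert]; omega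

lemma tauOf_posDef (k : ℕ) (t : ℕ → ℝ) (ht : ∀ m, t (m + 1) ≤ 0)
    (hS : 0 < t 0 + 2 * ∑ m ∈ Finset.range k, t (m + 1)) : (tauOf (k + 1) t).PosDef := by
  apply posDef_of_diagDom _ (tauOf_isHermitian _ _)
  intro i
  have hF : ∀ m : ℤ, m ≠ 0 → cutF (k + 1) t m ≤ 0 := by
    intro m hm
    unfold cutF
    split_ifs
    · obtain ⟨p, hp⟩ : ∃ p, m.natAbs = p + 1 := ⟨m.natAbs - 1, by omega⟩
      rw [hp]; exact ht p
    · exact le_rfl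
  let f : ℤ → ℝ := fun m => if m = 0 then 0 else -cutF (k + 1) t m
  have hf0 : ∀ m, 0 ≤ f m := by
    intro m
    simp only [f]
    split_ifs with h
    · exact le_rfl
    · linarith [hF m h]
  have hfF : ∀ m, m ≠ 0 → cutF (k + 1) t m = -f m := by
    intro m hm
    simp [f, hm]
  have hdiag : t 0 ≤ tauOf (k + 1) t i i := by
    have hi := i.2
    rw [tauOf_eq]
    have h1 : cutF (k + 1) t ((i : ℤ) - i) = t 0 := by simp [cutF]
    have h2 := hF ((i : ℤ) + i + 2) (by omega)
    have h3 := hF (2 * ((k + 1 : ℕ) : ℤ) - i - i) (by omega)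
    linarith
  let φ : Fin (k + 1) ⊕ Fin (k + 1) ⊕ Fin (k + 1) → ℤ := fun x =>
    match x with
    | .inl j => (i : ℤ) - j
    | .inr (.inl j) => (i : ℤ) + j + 2
    | .inr (.inr j) => -(2 * ((k + 1 : ℕ) : ℤ) - i - j)
  have hφ : Function.Injective φ := by
    have hi := i.2
    rintro (a | a | a) (b | b | b) hab <;>
      (have ha := a.2; have hb := b.2; simp only [φ] at hab) <;>
      first
        | (exfalso; omega)
        | (have : a = b := by (apply Fin.ext; omega)
           rw [this])
  have hoff : ∑ j ∈ Finset.univ.erase i, ‖tauOf (k + 1) t i j‖ ≤ ∑ x, f (φ x) := by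
    rw [Fintype.sum_sum_type, Fintype.sum_sum_type, ← Finset.sum_add_distrib,
      ← Finset.sum_add_distrib]
    refine le_trans (Finset.sum_le_sum (g := fun j => f (φ (.inl j)) + (f (φ (.inr (.inl j))) +
      f (φ (.inr (.inr j))))) ?_) (Finset.sum_le_sum_of_subset_of_nonneg (Finset.erase_subset _ _) ?_)
    · intro j hj
      have hne : j ≠ i := (Finset.mem_erase.mp hj).1
      have hne' : (j : ℕ) ≠ i := fun h => hne (Fin.ext h)
      have hi := i.2
      have hjj := j.2
      rw [tauOf_eq, ← cutF_neg _ _ (2 * _ - _ - _), hfF _ (by omega), hfF _ (by omega), hfF _ (by omega)]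
      have b1 := hf0 ((i : ℤ) - j)
      have b2 := hf0 ((i : ℤ) + j + 2)
      have b3 := hf0 (-(2 * ((k + 1 : ℕ) : ℤ) - i - j))
      simp only [φ]
      rw [Real.norm_eq_abs, abs_le]
      constructor <;> linarith
    · intro j _ _
      have b1 := hf0 (φ (.inl j))
      have b2 := hf0 (φ (.inr (.inl j)))
      have b3 := hf0 (φ (.inr (.inr j)))
      linarith
  have hsum : ∑ x, f (φ x) ≤ ∑ m ∈ Finset.Icc (-(k : ℤ)) k, f m := by
    rw [← Finset.sum_image (s := Finset.univ) (f := f) (g := φ) hφ.injOn]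
    rw [← Finset.sum_filter_of_ne (p := fun m => m ∈ Finset.Icc (-(k : ℤ)) k)]
    · apply Finset.sum_le_sum_of_subset_of_nonneg
      · intro x hx
        exact (Finset.mem_filter.mp hx).2
      · intro m _ _
        exact hf0 m
    · intro m _ hm
      by_contra hc
      apply hm
      simp only [Finset.mem_Icc] at hc
      simp only [f]
      rw [cutF_zero _ _ _ (by omega)]
      simp
  have hw : ∑ m ∈ Finset.Icc (-(k : ℤ)) k, f m = -(2 * ∑ m ∈ Finset.range k, t (m + 1)) := by
    rw [← sum_window]
    apply Finset.sum_congr rfl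
    intro m hm
    rw [Finset.mem_Icc] at hm
    have : m.natAbs < k + 1 := by omega
    simp only [f, cutF, if_pos this]
  linarith

/-- `T * τ(t)` entrywise. -/
lemma triDiag_mul_tauOf (n : ℕ) (t : ℕ → ℝ) (i j : Fin n) :
    (triDiag n * tauOf n t) i j =
      2 * tauOf n t i j
        - (cutF n t ((i : ℤ) - 1 - j) + cutF n t ((i : ℤ) + 1 - j))
        + (cutF n t ((i : ℤ) + j + 1) + cutF n t ((i : ℤ) + j + 3))
        + (cutF n t (2 * n - i - j + 1) + cutF n t (2 * n - i - j - 1)) := by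
  let G : ℤ → ℝ := fun x => cutF n t (x - j) - cutF n t (x + j + 2) - cutF n t (2 * n - x - j)
  have hi := i.2
  have hj := j.2
  have hG1 : G (-1) = 0 := by
    simp only [G]
    rw [← cutF_neg n t (-1 - j), cutF_zero n t (2 * n - _ - _) (by omega)]
    rw [show (-(-1 - (j : ℤ))) = -1 + j + 2 by ring]
    ring
  have hG2 : G n = 0 := by
    simp only [G]
    rw [cutF_zero n t (n + _ + _) (by omega), show (2 * (n : ℤ) - n - j) = n - j by ring]
    ring
  have hsum : (triDiag n * tauOf n t) i j = ∑ l ∈ Finset.range n,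
      ((if l = (i : ℕ) then 2 * G l else 0) - (if l = (i : ℕ) + 1 then G l else 0)
        - (if l + 1 = (i : ℕ) then G l else 0)) := by
    rw [Matrix.mul_apply, ← Fin.sum_univ_eq_sum_range (fun l : ℕ =>
      ((if l = (i : ℕ) then 2 * G l else 0) - (if l = (i : ℕ) + 1 then G l else 0)
        - (if l + 1 = (i : ℕ) then G l else 0)))]
    apply Finset.sum_congr rfl
    intro l _
    rw [tauOf_eq]
    change _ * G l = _
    unfold triDiag
    rcases lt_trichotomy (l : ℕ) i with h | h | h
    · rw [if_neg (by omega), if_neg (show ¬ ((l : ℕ) = i) by omega),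
        if_neg (show ¬ ((l : ℕ) = i + 1) by omega)]
      by_cases h2 : (l : ℕ) + 1 = i
      · rw [if_pos (by omega), if_pos h2]; ring
      · rw [if_neg (by omega), if_neg h2]; ring
    · rw [if_pos (by omega), if_pos h, if_neg (by omega), if_neg (by omega)]; ring
    · rw [if_neg (by omega), if_neg (show ¬ ((l : ℕ) = i) by omega),
        if_neg (show ¬ ((l : ℕ) + 1 = i) by omega)]
      by_cases h2 : (l : ℕ) = i + 1
      · rw [if_pos (by omega), if_pos h2]; ring
      · rw [if_neg (by omega), if_neg h2]; ring
  have s1 : ∑ l ∈ Finset.range n, (if l = (i : ℕ) then 2 * G l else 0) = 2 * G i := by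
    rw [Finset.sum_ite_eq']; simp
  have s2 : ∑ l ∈ Finset.range n, (if l = (i : ℕ) + 1 then G l else 0) = G (i + 1) := by
    rw [Finset.sum_ite_eq']
    split_ifs with h
    · push_cast; rfl
    · rw [Finset.mem_range] at h
      rw [← hG2]; congr 1; omega
  have s3 : ∑ l ∈ Finset.range n, (if l + 1 = (i : ℕ) then G l else 0) = G (i - 1) := by
    rcases Nat.eq_zero_or_pos (i : ℕ) with h | h
    · rw [h]
      simp [hG1]
    · have : ∀ l : ℕ, (l + 1 = (i : ℕ)) = (l = (i : ℕ) - 1) := by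
        intro l; apply propext; omega
      simp only [this]
      rw [Finset.sum_ite_eq', if_pos (by rw [Finset.mem_range]; omega)]
      congr 1; omega
  rw [hsum, Finset.sum_sub_distrib, Finset.sum_sub_distrib, s1, s2, s3, tauOf_eq]
  simp only [G]
  rw [show (i : ℤ) + 1 + j + 2 = i + j + 3 by ring, show (i : ℤ) - 1 + j + 2 = i + j + 1 by ring,
    show 2 * (n : ℤ) - (i + 1) - j = 2 * n - i - j - 1 by ring,
    show 2 * (n : ℤ) - (i - 1) - j = 2 * n - i - j + 1 by ring]
  ring

lemma triDiag_mul_tauOf_symm (n : ℕ) (t : ℕ → ℝ) (i j : Fin n) :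
    (triDiag n * tauOf n t) i j = (triDiag n * tauOf n t) j i := by
  rw [triDiag_mul_tauOf, triDiag_mul_tauOf, tauOf_symm n t i j,
    ← cutF_neg n t ((i : ℤ) - 1 - j), ← cutF_neg n t ((i : ℤ) + 1 - j),
    show -((i : ℤ) - 1 - j) = j + 1 - i by ring, show -((i : ℤ) + 1 - j) = j - 1 - i by ring,
    add_comm (i : ℤ) j, sub_right_comm (2 * (n : ℤ)) i j]
  ring

lemma Qmat_eq (γ : ℝ) (n : ℕ) :
    Qmat γ n = tauOf n (fun m => if m = 0 then 1 + γ / 12 else if m = 1 then -(γ / 24) else 0) := by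
  ext i j
  have hi := i.2
  have hj := j.2
  rw [tauOf_eq]
  have h2 : ∀ m : ℤ, 2 ≤ m → cutF n (fun m => if m = 0 then 1 + γ / 12 else if m = 1 then -(γ / 24)
      else 0) m = 0 := by
    intro m hm
    have a : m.natAbs ≠ 0 := by omega
    have b : m.natAbs ≠ 1 := by omega
    simp only [cutF, if_neg a, if_neg b, ite_self]
  rw [h2 (i + j + 2) (by omega), h2 (2 * n - i - j) (by omega)]
  have hlt : ((i : ℤ) - j).natAbs < n := by omega
  simp only [cutF, if_pos hlt, Qmat, Matrix.add_apply, Matrix.smul_apply, triDiag, smul_eq_mul]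
  by_cases h : i = j
  · subst h
    simp; ring
  · have h' : (i : ℕ) ≠ j := fun e => h (Fin.ext e)
    rw [Matrix.one_apply_ne h, if_neg (show ¬ ((i : ℤ) = j) by omega),
      if_neg (show ¬ (((i : ℤ) - j).natAbs = 0) by omega)]
    split_ifs <;> ring

lemma gCoef_rec (γ : ℝ) (hγ : γ ∈ Set.Ioo (1 : ℝ) 2) (m : ℕ) :
    gCoef γ ((m + 1 : ℕ) : ℤ) * (m + 1 + γ / 2) = gCoef γ (m : ℤ) * (m - γ / 2) := by
  obtain ⟨h1, h2⟩ := hγ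
  have hne : ∀ q : ℤ, γ / 2 ≠ q := by
    intro q hq
    have a : (0 : ℝ) < q := by linarith
    have b : (q : ℝ) < 1 := by linarith
    have a' : 0 < q := by exact_mod_cast a
    have b' : q < 1 := by exact_mod_cast b
    omega
  have hm0 : (0 : ℝ) ≤ m := Nat.cast_nonneg m
  have n1 : γ / 2 - m ≠ 0 := by
    intro h; apply hne m; push_cast; linarith
  have n2 : γ / 2 + m + 1 ≠ 0 := by positivity
  have G1 : Real.Gamma (γ / 2 - m + 1) = (γ / 2 - m) * Real.Gamma (γ / 2 - m) :=
    Real.Gamma_add_one n1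
  have G2 : Real.Gamma (γ / 2 + m + 1 + 1) = (γ / 2 + m + 1) * Real.Gamma (γ / 2 + m + 1) :=
    Real.Gamma_add_one n2
  have g1 : Real.Gamma (γ / 2 - m) ≠ 0 := by
    apply Real.Gamma_ne_zero
    intro p hp
    apply hne (m - p); push_cast; linarith
  have g2 : Real.Gamma (γ / 2 + m + 1) ≠ 0 := (Real.Gamma_pos_of_pos (by positivity)).ne'
  unfold gCoef
  simp only [Int.cast_natCast, zpow_natCast]
  push_cast
  rw [show γ / 2 - ((m : ℝ) + 1) + 1 = γ / 2 - m by ring,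
    show γ / 2 + ((m : ℝ) + 1) + 1 = γ / 2 + m + 1 + 1 by ring, G1, G2, pow_succ]
  generalize Real.Gamma (γ / 2 - m) = a at *
  generalize Real.Gamma (γ / 2 + m + 1) = b at *
  generalize Real.Gamma (γ + 1) = c at *
  rw [div_mul_eq_mul_div, div_mul_eq_mul_div, div_eq_div_iff (by positivity) (by positivity)]
  ring

lemma gCoef_zero_pos (γ : ℝ) (hγ : γ ∈ Set.Ioo (1 : ℝ) 2) : 0 < gCoef γ 0 := by
  obtain ⟨h1, h2⟩ := hγ
  have a := Real.Gamma_pos_of_pos (show 0 < γ + 1 by linarith)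
  have b := Real.Gamma_pos_of_pos (show 0 < γ / 2 + 1 by linarith)
  simp only [gCoef, zpow_zero, Int.cast_zero, sub_zero, add_zero]
  positivity

lemma gCoef_neg (γ : ℝ) (hγ : γ ∈ Set.Ioo (1 : ℝ) 2) (m : ℕ) :
    gCoef γ ((m + 1 : ℕ) : ℤ) < 0 := by
  have h := hγ
  obtain ⟨h1, h2⟩ := h
  induction m with
  | zero =>
    have r := gCoef_rec γ hγ 0
    have z := gCoef_zero_pos γ hγ
    simp only [Nat.cast_zero, zero_add, zero_sub] at r ⊢
    by_contra hc
    push Not at hc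
    have : 0 ≤ gCoef γ ((1 : ℕ) : ℤ) * (1 + γ / 2) := by positivity
    nlinarith
  | succ m ih =>
    have r := gCoef_rec γ hγ (m + 1)
    by_contra hc
    push Not at hc
    have : 0 ≤ gCoef γ ((m + 1 + 1 : ℕ) : ℤ) * (((m + 1 : ℕ) : ℝ) + 1 + γ / 2) := by positivity
    have hp : 0 < ((m + 1 : ℕ) : ℝ) - γ / 2 := by
      push_cast
      have : (0 : ℝ) ≤ m := Nat.cast_nonneg m
      linarith
    have := mul_neg_of_neg_of_pos ih hp
    linarith

lemma gCoef_sum (γ : ℝ) (hγ : γ ∈ Set.Ioo (1 : ℝ) 2) (k : ℕ) :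
    γ * (gCoef γ 0 + 2 * ∑ m ∈ Finset.range k, gCoef γ ((m + 1 : ℕ) : ℤ)) =
      gCoef γ (k : ℤ) * (γ - 2 * k) := by
  induction k with
  | zero => simp; ring
  | succ k ih =>
    have r := gCoef_rec γ hγ k
    rw [Finset.sum_range_succ]
    push_cast at *
    linarith

lemma tauAhat_posDef (γ : ℝ) (hγ : γ ∈ Set.Ioo (1 : ℝ) 2) (k : ℕ) :
    (tauAhat γ (k + 1)).PosDef := by
  apply tauOf_posDef
  · intro m
    exact (gCoef_neg γ hγ m).le
  · have h := gCoef_sum γ hγ k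
    have hγ0 : 0 < γ := by linarith [hγ.1]
    have hr : 0 < gCoef γ (k : ℤ) * (γ - 2 * k) := by
      rcases k with _ | k
      · simpa using mul_pos (gCoef_zero_pos γ hγ) hγ0
      · apply mul_pos_of_neg_of_neg (gCoef_neg γ hγ k)
        have : (0 : ℝ) ≤ k := Nat.cast_nonneg k
        push_cast
        linarith [hγ.2]
    rw [← h] at hr
    exact pos_of_mul_pos_right hr hγ0.le

lemma Qmat_posDef (γ : ℝ) (hγ : γ ∈ Set.Ioo (1 : ℝ) 2) (k : ℕ) : (Qmat γ (k + 1)).PosDef := by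
  have hγ0 : 0 < γ := by linarith [hγ.1]
  rw [Qmat_eq]
  apply tauOf_posDef
  · intro m
    rw [if_neg (by omega)]
    split_ifs
    · linarith
    · exact le_rfl
  · rcases k with _ | k
    · simp; positivity
    · rw [Finset.sum_range_succ']
      simp
      linarith

lemma Pmat_isHermitian (γ : ℝ) (n : ℕ) : (Pmat γ n).IsHermitian := by
  ext i j
  simp only [Matrix.conjTranspose_apply, star_trivial, Pmat, Qmat, tauAhat, Matrix.add_mul,
    Matrix.one_mul, Matrix.smul_mul, Matrix.add_apply, Matrix.smul_apply]
  rw [tauOf_symm n _ j i, triDiag_mul_tauOf_symm n _ j i]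

lemma Pmat_posDef (γ : ℝ) (hγ : γ ∈ Set.Ioo (1 : ℝ) 2) (n : ℕ) (hn : 1 ≤ n) :
    (Pmat γ n).PosDef := by
  obtain ⟨k, rfl⟩ : ∃ k, n = k + 1 := ⟨n - 1, by omega⟩
  exact posDef_mul _ _ (Qmat_posDef γ hγ k) (tauAhat_posDef γ hγ k) (Pmat_isHermitian γ _)

lemma isSymm_of_posDef {ι : Type*} (A : Matrix ι ι ℝ) (h : A.PosDef) : A.IsSymm := by
  have := h.isHermitian
  rwa [Matrix.IsHermitian, Matrix.conjTranspose_eq_transpose_of_trivial] at this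

theorem stmt_11 (α β : ℝ) (hα : α ∈ Set.Ioo (1 : ℝ) 2) (hβ : β ∈ Set.Ioo (1 : ℝ) 2)
    (Nx Ny : ℕ) (hNx : 1 ≤ Nx) (hNy : 1 ≤ Ny)
    (ηα ηβ : ℝ) (hηα : 0 < ηα) (hηβ : 0 < ηβ) :
    ∀ Pτ : Matrix (Fin Ny × Fin Nx) (Fin Ny × Fin Nx) ℝ,
      Pτ = 1 + ηα • ((1 : Matrix (Fin Ny) (Fin Ny) ℝ) ⊗ₖ Pmat α Nx) +
             ηβ • (Pmat β Ny ⊗ₖ (1 : Matrix (Fin Nx) (Fin Nx) ℝ)) →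
      (Pmat α Nx).IsSymm ∧ (Pmat α Nx).PosDef ∧
      (Pmat β Ny).IsSymm ∧ (Pmat β Ny).PosDef ∧
      Pτ.IsSymm ∧ Pτ.PosDef ∧ IsUnit Pτ := by
  intro Pτ hP
  have ha := Pmat_posDef α hα Nx hNx
  have hb := Pmat_posDef β hβ Ny hNy
  have hp : Pτ.PosDef := by
    rw [hP]
    exact (Matrix.PosDef.one.add ((Matrix.PosDef.one.kronecker ha).smul hηα)).add
      ((hb.kronecker Matrix.PosDef.one).smul hηβ)
  exact ⟨isSymm_of_posDef _ ha, ha, isSymm_of_posDef _ hb, hb, isSymm_of_posDef _ hp, hp, hp.isUnit⟩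
end

section
/- Let f₁, f₂ : [−π,π] → ℝ be Lebesgue-integrable even functions with f₁ > 0 almost everywhere, and suppose the essential infimum l̃ and essential supremum L̃ of f₂/f₁ over [−π,π] are finite. For n ≥ 1, let T₁ and T₂ be the n×n real symmetric Toeplitz matrices with (j,k) entries (T_l)_{jk} = (1/(2π)) ∫_{−π}^{π} f_l(θ) cos((j−k)θ) dθ, l = 1,2. Then T₁ is positive definite, and for every nonzero y ∈ ℝ^n one has l̃·(yᵀT₁y) ≤ yᵀT₂y ≤ L̃·(yᵀT₁y); moreover, if l̃ < L̃ these inequalities are strict. Consequently every eigenvalue of T₁^{−1}T₂ lies in [l̃, L̃], and in the open interval (l̃, L̃) when l̃ < L̃. -/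
open MeasureTheory Real Matrix

/-- The squared modulus of the trigonometric polynomial with coefficients `y`. -/
noncomputable def trigW {n : ℕ} (y : Fin n → ℝ) (θ : ℝ) : ℝ :=
  (∑ j, y j * Real.cos ((j : ℕ) * θ)) ^ 2 + (∑ j, y j * Real.sin ((j : ℕ) * θ)) ^ 2

lemma trigW_nonneg {n : ℕ} (y : Fin n → ℝ) (θ : ℝ) : 0 ≤ trigW y θ := by
  unfold trigW; positivity

lemma trigW_continuous {n : ℕ} (y : Fin n → ℝ) : Continuous (trigW y) := by
  unfold trigW; fun_prop

lemma trigW_eq {n : ℕ} (y : Fin n → ℝ) (θ : ℝ) :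
    trigW y θ = ∑ j, ∑ k, y j * y k * Real.cos ((((j : ℤ) - (k : ℤ)) : ℝ) * θ) := by
  unfold trigW
  rw [pow_two, pow_two, Finset.sum_mul_sum, Finset.sum_mul_sum, ← Finset.sum_add_distrib]
  refine Finset.sum_congr rfl fun j _ => ?_
  rw [← Finset.sum_add_distrib]
  refine Finset.sum_congr rfl fun k _ => ?_
  push_cast
  rw [sub_mul, Real.cos_sub]
  ring

lemma trigW_zero_finite {n : ℕ} (y : Fin n → ℝ) (hy : y ≠ 0) :
    {θ ∈ Set.Ioc (-π) π | trigW y θ = 0}.Finite := by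
  set p : Polynomial ℂ := ∑ j : Fin n, Polynomial.monomial (j : ℕ) ((y j : ℝ) : ℂ) with hp
  have hp0 : p ≠ 0 := by
    intro h
    apply hy
    funext i
    have := congrArg (fun q => Polynomial.coeff q (i : ℕ)) h
    simp only [hp, Polynomial.finset_sum_coeff, Polynomial.coeff_monomial, Fin.val_inj,
      Finset.sum_ite_eq', Finset.mem_univ, if_true, Polynomial.coeff_zero] at this
    simpa using this
  have hfin : {z : ℂ | p.IsRoot z}.Finite := Polynomial.finite_setOf_isRoot hp0
  have hinj : Set.InjOn (fun θ : ℝ => ((Circle.exp θ : Circle) : ℂ)) (Set.Ioc (-π) π) := by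
    intro a ha b hb h
    exact Circle.exp_injOn_Ioc (by linarith) ha hb (Subtype.ext h)
  refine Set.Finite.of_finite_image (f := fun θ : ℝ => ((Circle.exp θ : Circle) : ℂ))
    (hfin.subset ?_) (hinj.mono fun x hx => hx.1)
  rintro _ ⟨θ, ⟨-, h⟩, rfl⟩
  have h1 : (∑ j, y j * Real.cos ((j : ℕ) * θ)) = 0 := by
    unfold trigW at h; nlinarith [sq_nonneg (∑ j, y j * Real.cos ((j : ℕ) * θ)),
      sq_nonneg (∑ j, y j * Real.sin ((j : ℕ) * θ))]
  have h2 : (∑ j, y j * Real.sin ((j : ℕ) * θ)) = 0 := by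
    unfold trigW at h; nlinarith [sq_nonneg (∑ j, y j * Real.cos ((j : ℕ) * θ)),
      sq_nonneg (∑ j, y j * Real.sin ((j : ℕ) * θ))]
  have key : p.eval ((Circle.exp θ : Circle) : ℂ) =
      ((∑ j, y j * Real.cos ((j : ℕ) * θ) : ℝ) : ℂ) +
      ((∑ j, y j * Real.sin ((j : ℕ) * θ) : ℝ) : ℂ) * Complex.I := by
    rw [hp, Polynomial.eval_finset_sum]
    push_cast
    rw [Finset.sum_mul, ← Finset.sum_add_distrib]
    refine Finset.sum_congr rfl fun j _ => ?_
    rw [Polynomial.eval_monomial, ← Complex.exp_nat_mul, ← mul_assoc,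
      Complex.exp_mul_I]
    ring
  simp only [Set.mem_setOf_eq, Polynomial.IsRoot, key, h1, h2]
  simp

lemma trigW_pos_ae {n : ℕ} (y : Fin n → ℝ) (hy : y ≠ 0) :
    ∀ᵐ θ ∂(volume.restrict (Set.Icc (-π) π)), 0 < trigW y θ := by
  rw [← restrict_Ioc_eq_restrict_Icc]
  have h := (trigW_zero_finite y hy).measure_zero volume
  rw [ae_restrict_iff' measurableSet_Ioc]
  filter_upwards [compl_mem_ae_iff.2 h] with θ hθ hm
  refine lt_of_le_of_ne (trigW_nonneg y θ) fun h0 => hθ ⟨hm, h0.symm⟩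

lemma int_mul_cont {f g : ℝ → ℝ} (hf : IntegrableOn f (Set.Icc (-π) π)) (hg : Continuous g) :
    IntegrableOn (fun θ => f θ * g θ) (Set.Icc (-π) π) :=
  hf.mul_continuousOn hg.continuousOn isCompact_Icc

lemma quad_eq {n : ℕ} (f : ℝ → ℝ) (hf : IntegrableOn f (Set.Icc (-π) π))
    (T : Matrix (Fin n) (Fin n) ℝ)
    (hT : ∀ j k, T j k =
      (1 / (2 * π)) * ∫ θ in (-π)..π, f θ * Real.cos ((((j : ℤ) - (k : ℤ)) : ℝ) * θ))
    (y : Fin n → ℝ) :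
    y ⬝ᵥ T *ᵥ y = (1 / (2 * π)) * ∫ θ in Set.Icc (-π) π, f θ * trigW y θ := by
  have hpi : -π ≤ π := by linarith [Real.pi_pos]
  simp only [trigW_eq, Finset.mul_sum, dotProduct, mulVec]
  rw [integral_finset_sum, Finset.mul_sum]
  · refine Finset.sum_congr rfl fun j _ => ?_
    rw [integral_finset_sum, Finset.mul_sum]
    · refine Finset.sum_congr rfl fun k _ => ?_
      rw [hT, intervalIntegral.integral_of_le hpi, integral_Icc_eq_integral_Ioc]
      have : ∀ θ, f θ * (y j * y k * Real.cos ((((j : ℤ) - (k : ℤ)) : ℝ) * θ)) =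
        (y j * y k) * (f θ * Real.cos ((((j : ℤ) - (k : ℤ)) : ℝ) * θ)) := fun θ => by ring
      simp only [this, integral_const_mul]
      ring
    · intro k _
      exact int_mul_cont hf (by fun_prop)
  · intro j _
    refine integrable_finset_sum _ fun k _ => ?_
    exact int_mul_cont hf (by fun_prop)

/-- Nonnegativity and the equality case. -/
lemma quad_pos {n : ℕ} (g : ℝ → ℝ) (hg : IntegrableOn g (Set.Icc (-π) π))
    (h0 : ∀ᵐ θ ∂(volume.restrict (Set.Icc (-π) π)), 0 ≤ g θ) (y : Fin n → ℝ) (hy : y ≠ 0) :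
    0 ≤ (∫ θ in Set.Icc (-π) π, g θ * trigW y θ) ∧
    ((∫ θ in Set.Icc (-π) π, g θ * trigW y θ) = 0 →
      ∀ᵐ θ ∂(volume.restrict (Set.Icc (-π) π)), g θ = 0) := by
  have h1 : 0 ≤ᵐ[volume.restrict (Set.Icc (-π) π)] fun θ => g θ * trigW y θ := by
    filter_upwards [h0] with θ hθ
    exact mul_nonneg hθ (trigW_nonneg y θ)
  refine ⟨integral_nonneg_of_ae h1, fun h => ?_⟩
  rw [integral_eq_zero_iff_of_nonneg_ae h1 (int_mul_cont hg (trigW_continuous y))] at h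
  filter_upwards [h, trigW_pos_ae y hy] with θ h2 h3
  exact (mul_eq_zero.1 h2).resolve_right h3.ne'

theorem stmt_13 (f₁ f₂ : ℝ → ℝ)
    (hint₁ : IntegrableOn f₁ (Set.Icc (-π) π))
    (hint₂ : IntegrableOn f₂ (Set.Icc (-π) π))
    (heven₁ : ∀ θ, f₁ (-θ) = f₁ θ) (heven₂ : ∀ θ, f₂ (-θ) = f₂ θ)
    (hpos : ∀ᵐ θ ∂(volume.restrict (Set.Icc (-π) π)), 0 < f₁ θ)
    (l L : ℝ)
    (hbddBelow : Filter.IsBoundedUnder (· ≥ ·)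
      (ae (volume.restrict (Set.Icc (-π) π))) (fun θ => f₂ θ / f₁ θ))
    (hbddAbove : Filter.IsBoundedUnder (· ≤ ·)
      (ae (volume.restrict (Set.Icc (-π) π))) (fun θ => f₂ θ / f₁ θ))
    (hl : l = essInf (fun θ => f₂ θ / f₁ θ) (volume.restrict (Set.Icc (-π) π)))
    (hL : L = essSup (fun θ => f₂ θ / f₁ θ) (volume.restrict (Set.Icc (-π) π)))
    (n : ℕ) (hn : 1 ≤ n)
    (T₁ T₂ : Matrix (Fin n) (Fin n) ℝ)
    (hT₁ : ∀ j k, T₁ j k =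
      (1 / (2 * π)) * ∫ θ in (-π)..π, f₁ θ * Real.cos ((((j : ℤ) - (k : ℤ)) : ℝ) * θ))
    (hT₂ : ∀ j k, T₂ j k =
      (1 / (2 * π)) * ∫ θ in (-π)..π, f₂ θ * Real.cos ((((j : ℤ) - (k : ℤ)) : ℝ) * θ)) :
    T₁.PosDef ∧
    (∀ y : Fin n → ℝ, y ≠ 0 →
      l * (y ⬝ᵥ T₁ *ᵥ y) ≤ y ⬝ᵥ T₂ *ᵥ y ∧ y ⬝ᵥ T₂ *ᵥ y ≤ L * (y ⬝ᵥ T₁ *ᵥ y)) ∧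
    (l < L → ∀ y : Fin n → ℝ, y ≠ 0 →
      l * (y ⬝ᵥ T₁ *ᵥ y) < y ⬝ᵥ T₂ *ᵥ y ∧ y ⬝ᵥ T₂ *ᵥ y < L * (y ⬝ᵥ T₁ *ᵥ y)) ∧
    (∀ (μ : ℝ) (v : Fin n → ℝ), v ≠ 0 → (T₁⁻¹ * T₂) *ᵥ v = μ • v →
      (l ≤ μ ∧ μ ≤ L) ∧ (l < L → l < μ ∧ μ < L)) := by
  have hpi := Real.pi_pos
  have hne : volume.restrict (Set.Icc (-π) π) ≠ 0 := by
    rw [Ne, Measure.restrict_eq_zero, Real.volume_Icc, ENNReal.ofReal_eq_zero]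
    linarith
  have hne' : (ae (volume.restrict (Set.Icc (-π) π))).NeBot := ae_neBot.2 hne
  have hc : 0 < 1 / (2 * π) := by positivity
  have hlo := ae_essInf_le hbddBelow
  have hhi := ae_le_essSup hbddAbove
  rw [← hl] at hlo
  rw [← hL] at hhi
  have q1 := quad_eq f₁ hint₁ T₁ hT₁
  have q2 := quad_eq f₂ hint₂ T₂ hT₂
  have i1 : ∀ y : Fin n → ℝ, IntegrableOn (fun θ => f₁ θ * trigW y θ) (Set.Icc (-π) π) :=
    fun y => int_mul_cont hint₁ (trigW_continuous y)
  have i2 : ∀ y : Fin n → ℝ, IntegrableOn (fun θ => f₂ θ * trigW y θ) (Set.Icc (-π) π) :=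
    fun y => int_mul_cont hint₂ (trigW_continuous y)
  have e1 : ∀ y : Fin n → ℝ, (y ⬝ᵥ T₂ *ᵥ y) - l * (y ⬝ᵥ T₁ *ᵥ y) =
      (1 / (2 * π)) * ∫ θ in Set.Icc (-π) π, (f₂ θ - l * f₁ θ) * trigW y θ := by
    intro y
    have : ∀ θ, (f₂ θ - l * f₁ θ) * trigW y θ = f₂ θ * trigW y θ - l * (f₁ θ * trigW y θ) :=
      fun θ => by ring
    simp only [this]
    rw [integral_sub (i2 y) ((i1 y).const_mul l), integral_const_mul, q1, q2]
    ring
  have e2 : ∀ y : Fin n → ℝ, L * (y ⬝ᵥ T₁ *ᵥ y) - (y ⬝ᵥ T₂ *ᵥ y) =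
      (1 / (2 * π)) * ∫ θ in Set.Icc (-π) π, (L * f₁ θ - f₂ θ) * trigW y θ := by
    intro y
    have : ∀ θ, (L * f₁ θ - f₂ θ) * trigW y θ = L * (f₁ θ * trigW y θ) - f₂ θ * trigW y θ :=
      fun θ => by ring
    simp only [this]
    rw [integral_sub ((i1 y).const_mul L) (i2 y), integral_const_mul, q1, q2]
    ring
  have g1 : ∀ᵐ θ ∂(volume.restrict (Set.Icc (-π) π)), 0 ≤ f₂ θ - l * f₁ θ := by
    filter_upwards [hpos, hlo] with θ h1 h2
    have := (le_div_iff₀ h1).1 h2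
    linarith
  have g2 : ∀ᵐ θ ∂(volume.restrict (Set.Icc (-π) π)), 0 ≤ L * f₁ θ - f₂ θ := by
    filter_upwards [hpos, hhi] with θ h1 h2
    have := (div_le_iff₀ h1).1 h2
    linarith
  have ig1 : IntegrableOn (fun θ => f₂ θ - l * f₁ θ) (Set.Icc (-π) π) :=
    hint₂.sub (hint₁.const_mul l)
  have ig2 : IntegrableOn (fun θ => L * f₁ θ - f₂ θ) (Set.Icc (-π) π) :=
    (hint₁.const_mul L).sub hint₂
  have P1 : ∀ y : Fin n → ℝ, y ≠ 0 → 0 < y ⬝ᵥ T₁ *ᵥ y := by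
    intro y hy
    obtain ⟨a, b⟩ := quad_pos f₁ hint₁ (hpos.mono fun _ h => h.le) y hy
    rw [q1]
    refine mul_pos hc (lt_of_le_of_ne a fun h => ?_)
    obtain ⟨θ, h1, h2⟩ := ((b h.symm).and hpos).exists
    linarith
  have PD : T₁.PosDef := by
    refine .of_dotProduct_mulVec_pos ?_ fun y hy => by simpa using P1 y hy
    ext j k
    rw [conjTranspose_apply, star_trivial, hT₁, hT₁]
    congr 2
    funext θ
    rw [← Real.cos_neg]
    congr 2
    ring
  have W : ∀ y : Fin n → ℝ, y ≠ 0 →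
      l * (y ⬝ᵥ T₁ *ᵥ y) ≤ y ⬝ᵥ T₂ *ᵥ y ∧ y ⬝ᵥ T₂ *ᵥ y ≤ L * (y ⬝ᵥ T₁ *ᵥ y) := by
    intro y hy
    have a := mul_nonneg hc.le (quad_pos _ ig1 g1 y hy).1
    have b := mul_nonneg hc.le (quad_pos _ ig2 g2 y hy).1
    rw [← e1] at a
    rw [← e2] at b
    constructor <;> linarith
  have S : l < L → ∀ y : Fin n → ℝ, y ≠ 0 →
      l * (y ⬝ᵥ T₁ *ᵥ y) < y ⬝ᵥ T₂ *ᵥ y ∧ y ⬝ᵥ T₂ *ᵥ y < L * (y ⬝ᵥ T₁ *ᵥ y) := by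
    intro hlL y hy
    refine ⟨lt_of_le_of_ne (W y hy).1 fun h => ?_, lt_of_le_of_ne (W y hy).2 fun h => ?_⟩
    · have h' := e1 y
      rw [← h, sub_self] at h'
      have hz := (quad_pos _ ig1 g1 y hy).2 ((mul_eq_zero.1 h'.symm).resolve_left hc.ne')
      have : (fun θ => f₂ θ / f₁ θ) =ᵐ[volume.restrict (Set.Icc (-π) π)] fun _ => l := by
        filter_upwards [hz, hpos] with θ h1 h2
        rw [div_eq_iff h2.ne']; linarith
      rw [essSup_congr_ae this, essSup_const _ hne] at hL
      linarith
    · have h' := e2 y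
      rw [← h, sub_self] at h'
      have hz := (quad_pos _ ig2 g2 y hy).2 ((mul_eq_zero.1 h'.symm).resolve_left hc.ne')
      have : (fun θ => f₂ θ / f₁ θ) =ᵐ[volume.restrict (Set.Icc (-π) π)] fun _ => L := by
        filter_upwards [hz, hpos] with θ h1 h2
        rw [div_eq_iff h2.ne']; linarith
      rw [essInf_congr_ae this, essInf_const _ hne] at hl
      linarith
  refine ⟨PD, W, S, fun μ v hv hev => ?_⟩
  have hdet : IsUnit T₁.det := (Matrix.isUnit_iff_isUnit_det _).1 PD.isUnit
  have h2 : T₂ *ᵥ v = μ • (T₁ *ᵥ v) := by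
    rw [← mulVec_smul, ← hev, mulVec_mulVec, ← Matrix.mul_assoc, Matrix.mul_nonsing_inv _ hdet,
      Matrix.one_mul]
  have h3 : v ⬝ᵥ T₂ *ᵥ v = μ * (v ⬝ᵥ T₁ *ᵥ v) := by
    rw [h2, dotProduct_smul, smul_eq_mul]
  have hp := P1 v hv
  refine ⟨?_, fun hlL => ?_⟩
  · obtain ⟨a, b⟩ := W v hv
    rw [h3] at a b
    exact ⟨le_of_mul_le_mul_right a hp, le_of_mul_le_mul_right b hp⟩
  · obtain ⟨a, b⟩ := S hlL v hv
    rw [h3] at a b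
    exact ⟨lt_of_mul_lt_mul_right a hp.le, lt_of_mul_lt_mul_right b hp.le⟩
end
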